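/- arXiv:1403.6958 — 3 statements merged into one kernel-verified Lean document; each statement's English description precedes it below -/
import Mathlib

section
/- Lower bound of Lemma 1: let a ≥ 1 and let u : ℤ → ℕ be a function with finite support of cardinality h ≥ 1 and total sum Σ_{i∈ℤ} u_i = A with A ≥ h. Define (φ_a(u))_i = max_{k ∈ {i, i−1, …, i−a+1}} u_k. Then Σ_{i∈ℤ} (φ_a(u))_i ≥ A + (a−1)·⌈A/h⌉. -/
/-!
Fix a position `m`. Cut `u` just before `m`, move the right part `a - 1` steps to the right and fill
the gap with copies of `u m`. The window ending at any position reaches the entry that the stretched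
sequence has there, so the sliding maximum dominates the stretched sequence, whose sum exceeds that
of `u` by `(a - 1) * u m`. Some `m` in the support has `u m` at least the mean `A / h`, hence,
being an integer, at least its ceiling.
-/

open Set Function
open scoped Pointwise

variable {M : Type*}

/-- The sliding-window maximum `φ_a(u)`: its value at `i` is the supremum of `u` over the window of
length `a` ending at `i`. For `a ≤ 0` the window is empty and the value is `⊥`. -/
noncomputable def slidingMax [SemilatticeSup M] [OrderBot M] (a : ℤ) (u : ℤ → M) (i : ℤ) : M :=
  (Finset.Icc (i - a + 1) i).sup u

/-- The sequence `u` with `b` further copies of its entry at `m` inserted in front of position `m`,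
the entries from `m` on being moved `b` steps to the right. It serves as a minorant of the sliding
maximum whose sum is explicit. -/
def stretch (m : ℤ) (b : ℕ) (u : ℤ → M) (i : ℤ) : M :=
  if i < m then u i else if i < m + b then u m else u (i - b)

theorem stretch_le_slidingMax [SemilatticeSup M] [OrderBot M] (m : ℤ) (b : ℕ) (u : ℤ → M) :
    stretch m b u ≤ slidingMax (b + 1) u := by
  intro i
  have le_of_mem_window {k : ℤ} (hik : i - b ≤ k) (hki : k ≤ i) : u k ≤ slidingMax (b + 1) u i :=
    Finset.le_sup (Finset.mem_Icc.mpr ⟨by omega, hki⟩)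
  unfold stretch
  split_ifs <;> exact le_of_mem_window (by omega) (by omega)

theorem stretch_eq_indicator_add [AddZeroClass M] (m : ℤ) (b : ℕ) (u : ℤ → M) :
    stretch m b u = fun i ↦ (Iio m).indicator u i + (Ici m).indicator u (i - b) +
      (Ico m (m + b)).indicator (fun _ ↦ u m) i := by
  funext i
  simp only [stretch, indicator_apply, mem_Iio, mem_Ici, mem_Ico]
  grind [add_zero, zero_add]

theorem finsum_stretch [AddCommMonoid M] {u : ℤ → M} (hu : (support u).Finite) (m : ℤ) (b : ℕ) :
    ∑ᶠ i, stretch m b u i = ∑ᶠ i, u i + b • u m := by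
  have hleft : (support ((Iio m).indicator u)).Finite := hu.subset (by simp)
  have hright : (support ((Ici m).indicator u)).Finite := hu.subset (by simp)
  have hshifted : (support fun i ↦ (Ici m).indicator u (i - b)).Finite :=
    hright.preimage sub_left_injective.injOn
  have hgap : (support ((Ico m (m + b)).indicator fun _ ↦ u m)).Finite :=
    (finite_Ico m (m + b)).subset support_indicator_subset
  have gap_sum : ∑ᶠ i, (Ico m (m + b)).indicator (fun _ ↦ u m) i = b • u m := by
    rw [← finsum_mem_def, ← Finset.coe_Ico, finsum_mem_coe_finset]
    simp
  calc ∑ᶠ i, stretch m b u i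
      = ∑ᶠ i, (Iio m).indicator u i + ∑ᶠ i, (Ici m).indicator u (i - b) + b • u m := by
        rw [stretch_eq_indicator_add, finsum_add_distrib _ hgap, finsum_add_distrib hleft hshifted,
          gap_sum]
        exact (hleft.union hshifted).subset (support_add _ _)
    _ = ∑ᶠ i, (Iio m).indicator u i + ∑ᶠ i, (Ici m).indicator u i + b • u m := by
        congr 2
        exact finsum_comp_equiv (Equiv.subRight (b : ℤ))
    _ = ∑ᶠ i, u i + b • u m := by
        rw [← finsum_add_distrib hleft hright, ← compl_Iio]
        simp only [indicator_self_add_compl_apply]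

section BotZero

variable [SemilatticeSup M] [OrderBot M]

theorem support_slidingMax_subset [Zero M] [IsBotZeroClass M] (a : ℤ) (u : ℤ → M) :
    support (slidingMax a u) ⊆ support u + Icc 0 (a - 1) := by
  intro i hi
  obtain ⟨k, hk, huk⟩ : ∃ k ∈ Finset.Icc (i - a + 1) i, u k ≠ 0 := by
    contrapose! hi
    simpa [slidingMax, ← bot_eq_zero] using hi
  rw [Finset.mem_Icc] at hk
  exact ⟨k, huk, i - k, ⟨by omega, by omega⟩, by simp⟩

theorem finite_support_slidingMax [Zero M] [IsBotZeroClass M] {u : ℤ → M}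
    (hu : (support u).Finite) (a : ℤ) : (support (slidingMax a u)).Finite :=
  (hu.add (finite_Icc 0 (a - 1))).subset (support_slidingMax_subset a u)

theorem finsum_add_nsmul_le_finsum_slidingMax [AddCommMonoid M] [IsBotZeroClass M]
    [IsOrderedAddMonoid M] {u : ℤ → M} (hu : (support u).Finite) (m : ℤ) (b : ℕ) :
    ∑ᶠ i, u i + b • u m ≤ ∑ᶠ i, slidingMax (b + 1) u i := by
  have hmax : (support (slidingMax (b + 1) u)).Finite := finite_support_slidingMax hu (b + 1)
  have hstretch : (support (stretch m b u)).Finite :=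
    hmax.subset fun i hi hzero ↦ hi (eq_zero_of_nonpos (hzero ▸ stretch_le_slidingMax m b u i))
  rw [← finsum_stretch hu]
  exact finsum_le_finsum' hstretch hmax (stretch_le_slidingMax m b u)

end BotZero

theorem exists_ceil_sum_div_card_le {ι K : Type*} [Field K] [LinearOrder K] [IsStrictOrderedRing K]
    [FloorRing K] {s : Finset ι} (hs : s.Nonempty) (f : ι → ℤ) :
    ∃ i ∈ s, ⌈((∑ j ∈ s, f j : ℤ) : K) / s.card⌉ ≤ f i := by
  obtain ⟨i, hi, hmean⟩ : ∃ i ∈ s, ((∑ j ∈ s, f j : ℤ) : K) / s.card ≤ f i := by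
    refine Finset.exists_le_of_sum_le hs ?_
    have hcard : (s.card : K) ≠ 0 := by simpa using hs.ne_empty
    simp [mul_div_cancel₀ _ hcard]
  exact ⟨i, hi, Int.ceil_le.mpr hmean⟩

theorem sliding_max_sum_lower_bound
    (a : ℤ) (ha : 1 ≤ a) (u : ℤ → ℕ) (hu : (Function.support u).Finite)
    (h A : ℕ) (hh : h = hu.toFinset.card) (h1 : 1 ≤ h)
    (hA : A = ∑ᶠ i : ℤ, u i) (hAh : h ≤ A) :
    (A : ℤ) + (a - 1) * ⌈(A : ℚ) / (h : ℚ)⌉ ≤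
      ((∑ᶠ i : ℤ, (Finset.Icc (i - a + 1) i).sup u : ℕ) : ℤ) := by
  have hne : hu.toFinset.Nonempty := Finset.card_pos.mp (hh ▸ h1)
  obtain ⟨m, -, hm⟩ := exists_ceil_sum_div_card_le (K := ℚ) hne fun i ↦ (u i : ℤ)
  have hceil : ⌈(A : ℚ) / h⌉ ≤ u m := by simpa [hA, hh, finsum_eq_sum u hu] using hm
  obtain ⟨b, rfl⟩ : ∃ b : ℕ, a = b + 1 := ⟨(a - 1).toNat, by omega⟩
  calc (A : ℤ) + (b + 1 - 1) * ⌈(A : ℚ) / h⌉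
      ≤ A + b * u m := by rw [add_sub_cancel_right]; gcongr
    _ = ((∑ᶠ i, u i + b • u m : ℕ) : ℤ) := by simp [hA]
    _ ≤ ((∑ᶠ i, slidingMax (b + 1) u i : ℕ) : ℤ) :=
        mod_cast finsum_add_nsmul_le_finsum_slidingMax hu m b
end

section
/- Lower bound of Proposition 2 (rectangular patterns): let a, b ≥ 1 be integers, let P = {(i, j) ∈ ℤ² : 0 ≤ i < a, 0 ≤ j < b}, and let E ⊆ ℤ² be a finite set with |E| = A ≥ 1. Then |E + P| ≥ A + (a−1)(b−1) + min_{h ∈ {1, …, A}} [ (a−1)·⌈A/h⌉ + (b−1)·h ]. -/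
open Pointwise

/-!
Add the rectangle `I × J` one side at a time. Adding `I × {0}` to `E` acts on each row separately,
so by Cauchy–Davenport it gains at least `#I - 1` points in every nonempty row of `E`, and it widens
the projection of `E` to the first axis by at least `#I - 1`. Adding `{0} × J` then gains at least
`#J - 1` points in every nonempty column of the widened set. If `E` has `w` nonempty columns and `r`
nonempty rows, then `#E ≤ w * r`, so `⌈#E / w⌉ ≤ r` and the minimum is bounded by its term at
`h = w`.
-/

open scoped Finset

section Fibers

variable {G K : Type*} [AddGroup G] [IsAddTorsionFree G] [DecidableEq G] [AddZeroClass K]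
  [DecidableEq K] (f : G →+ K) {J : Finset G}

lemma card_fiber_add_le_card_fiber_add (E : Finset G) (hJ : J.Nonempty) (hf : ∀ j ∈ J, f j = 0)
    {y : K} (hy : y ∈ E.image f) :
    #{e ∈ E | f e = y} + (#J - 1) ≤ #{x ∈ E + J | f x = y} := by
  have fiber_nonempty : {e ∈ E | f e = y}.Nonempty := Finset.fiber_nonempty_iff_mem_image.2 hy
  have fiber_add_subset : {e ∈ E | f e = y} + J ⊆ {x ∈ E + J | f x = y} := by
    refine Finset.add_subset_iff.2 fun e he j hj => ?_
    obtain ⟨heE, hey⟩ := Finset.mem_filter.1 he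
    exact Finset.mem_filter.2 ⟨Finset.add_mem_add heE hj, by rw [map_add, hf j hj, add_zero, hey]⟩
  calc #{e ∈ E | f e = y} + (#J - 1) = #{e ∈ E | f e = y} + #J - 1 :=
        (Nat.add_sub_assoc hJ.card_pos _).symm
    _ ≤ #({e ∈ E | f e = y} + J) := cauchy_davenport_of_isAddTorsionFree fiber_nonempty hJ
    _ ≤ #{x ∈ E + J | f x = y} := Finset.card_le_card fiber_add_subset

lemma card_add_mul_card_image_le_card_add (E : Finset G) (hJ : J.Nonempty)
    (hf : ∀ j ∈ J, f j = 0) : #E + (#J - 1) * #(E.image f) ≤ #(E + J) := by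
  have maps_to_image : Set.MapsTo f ↑(E + J) ↑(E.image f) := by
    intro x hx
    obtain ⟨e, he, j, hj, rfl⟩ := Finset.mem_add.1 hx
    rw [map_add, hf j hj, add_zero]
    exact Finset.mem_image_of_mem f he
  calc #E + (#J - 1) * #(E.image f)
      = ∑ y ∈ E.image f, (#{e ∈ E | f e = y} + (#J - 1)) := by
        rw [Finset.sum_add_distrib, ← Finset.card_eq_sum_card_image, Finset.sum_const,
          smul_eq_mul, mul_comm]
    _ ≤ ∑ y ∈ E.image f, #{x ∈ E + J | f x = y} :=
        Finset.sum_le_sum fun _ hy => card_fiber_add_le_card_fiber_add f E hJ hf hy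
    _ = #(E + J) := (Finset.card_eq_sum_card_fiberwise maps_to_image).symm

end Fibers

lemma ceil_card_div_card_image_fst_le {α β : Type*} [DecidableEq α] [DecidableEq β]
    (E : Finset (α × β)) :
    ⌈(#E : ℚ) / #(E.image Prod.fst)⌉ ≤ (#(E.image Prod.snd) : ℤ) := by
  have card_le_mul : #E ≤ #(E.image Prod.snd) * #(E.image Prod.fst) := by
    rw [mul_comm, ← Finset.card_product]
    exact Finset.card_le_card Finset.subset_product
  exact Int.ceil_le.2 (div_le_of_le_mul₀ (by positivity) (by positivity) (mod_cast card_le_mul))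

lemma product_singleton_zero_add_singleton_zero_product {G H : Type*} [AddZeroClass G]
    [DecidableEq G] [AddZeroClass H] [DecidableEq H] (I : Finset G) (J : Finset H) :
    I ×ˢ {(0 : H)} + {(0 : G)} ×ˢ J = I ×ˢ J := by
  rw [Finset.product_add_product_comm, Finset.singleton_zero, Finset.singleton_zero, add_zero,
    zero_add]

lemma card_image_fst_add_le_card_image_fst_add {G H : Type*} [AddGroup G] [IsAddTorsionFree G]
    [DecidableEq G] [AddZeroClass H] [DecidableEq H] {E : Finset (G × H)} {I : Finset G}
    (hE : E.Nonempty) (hI : I.Nonempty) :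
    #(E.image Prod.fst) + (#I - 1) ≤ #((E + I ×ˢ {(0 : H)}).image Prod.fst) := by
  have image_fst_add : (E + I ×ˢ {(0 : H)}).image Prod.fst = E.image Prod.fst + I := by
    rw [← AddMonoidHom.coe_fst, Finset.image_add, AddMonoidHom.coe_fst,
      Finset.product_image_fst (Finset.singleton_nonempty 0)]
  rw [image_fst_add, ← Nat.add_sub_assoc hI.card_pos]
  exact cauchy_davenport_of_isAddTorsionFree (hE.image Prod.fst) hI

section Product

variable {G H : Type*} [AddGroup G] [IsAddTorsionFree G] [DecidableEq G]
  [AddGroup H] [IsAddTorsionFree H] [DecidableEq H]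
  {E : Finset (G × H)} {I : Finset G} {J : Finset H}

lemma card_add_mul_card_image_snd_le_card_add (E : Finset (G × H)) (hI : I.Nonempty) :
    #E + (#I - 1) * #(E.image Prod.snd) ≤ #(E + I ×ˢ {(0 : H)}) := by
  simpa using card_add_mul_card_image_le_card_add (AddMonoidHom.snd G H) E
    (hI.product (Finset.singleton_nonempty 0)) (by simp)

lemma card_add_mul_card_image_fst_le_card_add (E : Finset (G × H)) (hJ : J.Nonempty) :
    #E + (#J - 1) * #(E.image Prod.fst) ≤ #(E + {(0 : G)} ×ˢ J) := by
  simpa using card_add_mul_card_image_le_card_add (AddMonoidHom.fst G H) E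
    ((Finset.singleton_nonempty 0).product hJ) (by simp)

lemma card_add_mul_card_images_le_card_add_product (hE : E.Nonempty) (hI : I.Nonempty)
    (hJ : J.Nonempty) :
    #E + (#I - 1) * (#J - 1) + ((#I - 1) * #(E.image Prod.snd) + (#J - 1) * #(E.image Prod.fst))
      ≤ #(E + I ×ˢ J) :=
  calc #E + (#I - 1) * (#J - 1)
        + ((#I - 1) * #(E.image Prod.snd) + (#J - 1) * #(E.image Prod.fst))
      = #E + (#I - 1) * #(E.image Prod.snd) + (#J - 1) * (#(E.image Prod.fst) + (#I - 1)) := by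
        ring
    _ ≤ #(E + I ×ˢ {0}) + (#J - 1) * #((E + I ×ˢ {(0 : H)}).image Prod.fst) := by
        gcongr
        · exact card_add_mul_card_image_snd_le_card_add E hI
        · exact card_image_fst_add_le_card_image_fst_add hE hI
    _ ≤ #(E + I ×ˢ {0} + {0} ×ˢ J) := card_add_mul_card_image_fst_le_card_add _ hJ
    _ = #(E + I ×ˢ J) := by rw [add_assoc, product_singleton_zero_add_singleton_zero_product]

theorem rect_pattern_lower_bound_general (hE : E.Nonempty) (hI : I.Nonempty) (hJ : J.Nonempty) :
    (#E : ℤ) + (#I - 1) * (#J - 1) +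
        (Finset.Icc 1 #E).inf' (Finset.nonempty_Icc.mpr hE.card_pos)
          (fun h : ℕ => ((#I : ℤ) - 1) * ⌈(#E : ℚ) / (h : ℚ)⌉ + ((#J : ℤ) - 1) * (h : ℤ)) ≤
      (#(E + I ×ˢ J) : ℤ) := by
  have width_mem : #(E.image Prod.fst) ∈ Finset.Icc 1 #E :=
    Finset.mem_Icc.2 ⟨(hE.image Prod.fst).card_pos, Finset.card_image_le⟩
  have side_nonneg : 0 ≤ (#I : ℤ) - 1 := sub_nonneg.2 (mod_cast hI.card_pos)
  calc _ ≤ (#E : ℤ) + (#I - 1) * (#J - 1) +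
        ((#I - 1) * ⌈(#E : ℚ) / #(E.image Prod.fst)⌉ + (#J - 1) * #(E.image Prod.fst)) := by
        gcongr
        exact Finset.inf'_le _ width_mem
    _ ≤ (#E : ℤ) + (#I - 1) * (#J - 1) +
        ((#I - 1) * #(E.image Prod.snd) + (#J - 1) * #(E.image Prod.fst)) := by
        gcongr
        exact ceil_card_div_card_image_fst_le E
    _ ≤ #(E + I ×ˢ J) := by
        have product_bound := card_add_mul_card_images_le_card_add_product hE hI hJ
        zify [Nat.cast_pred hI.card_pos, Nat.cast_pred hJ.card_pos] at product_bound
        exact product_bound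

end Product

theorem rect_pattern_lower_bound
    (a b : ℤ) (ha : 1 ≤ a) (hb : 1 ≤ b)
    (A : ℕ) (hA : 1 ≤ A) (E : Finset (ℤ × ℤ)) (hE : E.card = A) :
    (A : ℤ) + (a - 1) * (b - 1) +
        (Finset.Icc 1 A).inf' (Finset.nonempty_Icc.mpr hA)
          (fun h : ℕ => (a - 1) * ⌈(A : ℚ) / (h : ℚ)⌉ + (b - 1) * (h : ℤ)) ≤
      (((E + (Finset.Ico (0 : ℤ) a ×ˢ Finset.Ico (0 : ℤ) b)).card : ℕ) : ℤ) := by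
  subst hE
  simpa [zero_le_one.trans ha, zero_le_one.trans hb] using
    rect_pattern_lower_bound_general (Finset.card_pos.1 hA)
      (Finset.nonempty_Ico.2 (zero_lt_one.trans_le ha))
      (Finset.nonempty_Ico.2 (zero_lt_one.trans_le hb))
end

section
/- Achievability part of Proposition 2 (rectangular patterns): let a, b ≥ 1 be integers, let P = {(i, j) ∈ ℤ² : 0 ≤ i < a, 0 ≤ j < b}, and let A ≥ h ≥ 1 be integers with A = qh + r the Euclidean division of A by h. Define the rectangular-shaped set E = {(i, j) ∈ ℤ² : 0 ≤ i < r, 0 ≤ j ≤ q} ∪ {(i, j) ∈ ℤ² : r ≤ i < h, 0 ≤ j < q}. Then |E| = A and |E + P| = A + (a−1)(b−1) + (a−1)·⌈A/h⌉ + (b−1)·h. -/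
/-!
`E` is the union of two rectangles with a common corner, `r × (q + 1)` and `h × q`. Adding the
`a × b` rectangle enlarges each nonempty one by `a - 1` in width and `b - 1` in height, so the
sumset is again such a union. By inclusion-exclusion its size exceeds that of `E` by an amount that,
for fixed `a` and `b`, depends only on the overall width `h` and height `⌈A / h⌉` of `E`.
-/

open Pointwise

theorem finset_Icc_add_Icc {α : Type*} [AddCommMonoid α] [LinearOrder α]
    [IsOrderedAddMonoid α] [AddLeftReflectLE α] [ExistsAddOfLE α] [LocallyFiniteOrder α]
    {a b c d : α} (hab : a ≤ b) (hcd : c ≤ d) :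
    Finset.Icc a b + Finset.Icc c d = Finset.Icc (a + c) (b + d) := by
  rw [← Finset.coe_inj]
  push_cast
  exact Set.Icc_add_Icc hab hcd

theorem int_Ico_add_Ico {a b c d : ℤ} (hab : a < b) (hcd : c < d) :
    Finset.Ico a b + Finset.Ico c d = Finset.Ico (a + c) (b + d - 1) := by
  simp only [← Finset.Icc_sub_one_right_eq_Ico]
  rw [finset_Icc_add_Icc (Int.le_sub_one_of_lt hab) (Int.le_sub_one_of_lt hcd)]
  congr 1
  ring

theorem ceil_natCast_div_of_dvd {K : Type*} [Field K] [LinearOrder K] [IsStrictOrderedRing K]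
    [FloorRing K] {m n : ℕ} (hnm : n ∣ m) : ⌈(m : K) / n⌉ = (m / n : ℕ) := by
  rw [← Nat.cast_div_charZero hnm, Int.ceil_natCast]

theorem ceil_natCast_div_of_not_dvd {K : Type*} [Field K] [LinearOrder K] [IsStrictOrderedRing K]
    [FloorRing K] {m n : ℕ} (hn : 0 < n) (hnm : ¬ n ∣ m) :
    ⌈(m : K) / n⌉ = (m / n : ℕ) + 1 := by
  have hn' : (0 : K) < n := mod_cast hn
  have hlt : m / n * n < m :=
    (Nat.div_mul_le_self m n).lt_of_ne fun heq ↦ hnm (Dvd.intro_left _ heq)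
  have hle : m ≤ (m / n + 1) * n := (Nat.lt_mul_of_div_lt (Nat.lt_succ_self _) hn).le
  rw [Int.ceil_eq_iff, lt_div_iff₀ hn', div_le_iff₀ hn']
  push_cast [add_sub_cancel_right]
  exact ⟨mod_cast hlt, mod_cast hle⟩

/-- The `m × n` lattice rectangle with lower left corner at the origin, empty unless both side
lengths are positive. The sides are integers, so that differences of side lengths are not
truncated. -/
noncomputable def latticeRect (m n : ℤ) : Finset (ℤ × ℤ) :=
  Finset.Ico (0 : ℤ) m ×ˢ Finset.Ico (0 : ℤ) n

section latticeRect

variable {a b m n m' n' : ℤ}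

theorem latticeRect_zero_left (n : ℤ) : latticeRect 0 n = ∅ := by
  rw [latticeRect, Finset.Ico_self, Finset.empty_product]

theorem card_latticeRect (hm : 0 ≤ m) (hn : 0 ≤ n) : ((latticeRect m n).card : ℤ) = m * n := by
  rw [latticeRect, Finset.card_product, Nat.cast_mul, Int.card_Ico_of_le _ _ hm,
    Int.card_Ico_of_le _ _ hn, sub_zero, sub_zero]

theorem latticeRect_inter_latticeRect (m n m' n' : ℤ) :
    latticeRect m n ∩ latticeRect m' n' = latticeRect (min m m') (min n n') := by
  simp only [latticeRect, Finset.product_inter_product, Finset.Ico_inter_Ico, max_self]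

theorem latticeRect_add_latticeRect (hm : 0 < m) (hn : 0 < n) (ha : 0 < a) (hb : 0 < b) :
    latticeRect m n + latticeRect a b = latticeRect (m + a - 1) (n + b - 1) := by
  rw [latticeRect, latticeRect, Finset.product_add_product_comm, int_Ico_add_Ico hm ha,
    int_Ico_add_Ico hn hb, add_zero, latticeRect]

theorem card_latticeRect_union_latticeRect (hm : 0 ≤ m) (hmm' : m ≤ m') (hn' : 0 ≤ n')
    (hn'n : n' ≤ n) :
    ((latticeRect m n ∪ latticeRect m' n').card : ℤ) = m * n + (m' - m) * n' := by
  rw [Finset.cast_card_union, latticeRect_inter_latticeRect, min_eq_left hmm', min_eq_right hn'n,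
    card_latticeRect hm (hn'.trans hn'n), card_latticeRect (hm.trans hmm') hn',
    card_latticeRect hm hn']
  ring

theorem card_latticeRect_union_latticeRect_add_latticeRect (hm : 0 < m) (hmm' : m ≤ m')
    (hn' : 0 < n') (hn'n : n' ≤ n) (ha : 0 < a) (hb : 0 < b) :
    (((latticeRect m n ∪ latticeRect m' n') + latticeRect a b).card : ℤ) =
      (latticeRect m n ∪ latticeRect m' n').card + (a - 1) * (b - 1) + (a - 1) * n
        + (b - 1) * m' := by
  rw [Finset.union_add, latticeRect_add_latticeRect hm (hn'.trans_le hn'n) ha hb,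
    latticeRect_add_latticeRect (hm.trans_le hmm') hn' ha hb,
    card_latticeRect_union_latticeRect (by lia) (by lia) (by lia) (by lia),
    card_latticeRect_union_latticeRect hm.le hmm' hn'.le hn'n]
  ring

theorem Ico_product_Icc_union_Ico_product_Ico_eq_latticeRect_union {r h : ℤ} (hr : 0 ≤ r)
    (hrh : r ≤ h) (q : ℤ) :
    Finset.Ico 0 r ×ˢ Finset.Icc 0 q ∪ Finset.Ico r h ×ˢ Finset.Ico 0 q =
      latticeRect r (q + 1) ∪ latticeRect h q := by
  ext ⟨x, y⟩
  simp only [latticeRect, Finset.mem_union, Finset.mem_product, Finset.mem_Ico, Finset.mem_Icc]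
  lia

end latticeRect

theorem rect_pattern_achievability
    (a b : ℤ) (ha : 1 ≤ a) (hb : 1 ≤ b)
    (A h : ℕ) (h1 : 1 ≤ h) (hAh : h ≤ A)
    (q r : ℕ) (hq : q = A / h) (hr : r = A % h)
    (E : Finset (ℤ × ℤ))
    (hE : E = (Finset.Ico (0 : ℤ) (r : ℤ) ×ˢ Finset.Icc (0 : ℤ) (q : ℤ)) ∪
      (Finset.Ico (r : ℤ) (h : ℤ) ×ˢ Finset.Ico (0 : ℤ) (q : ℤ))) :
    E.card = A ∧
      (((E + (Finset.Ico (0 : ℤ) a ×ˢ Finset.Ico (0 : ℤ) b)).card : ℕ) : ℤ) =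
        (A : ℤ) + (a - 1) * (b - 1) + (a - 1) * ⌈(A : ℚ) / (h : ℚ)⌉ + (b - 1) * (h : ℤ) := by
  have hrh : r < h := hr ▸ Nat.mod_lt A h1
  have hq1 : 1 ≤ q := hq ▸ Nat.div_pos hAh h1
  have hA : h * q + r = A := by rw [hq, hr, Nat.div_add_mod]
  rw [Ico_product_Icc_union_Ico_product_Ico_eq_latticeRect_union (by lia) (by lia)] at hE
  have hcard : E.card = A := by
    zify
    rw [hE, card_latticeRect_union_latticeRect (by lia) (by lia) (by lia) (by lia), ← hA]
    push_cast
    ring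
  refine ⟨hcard, ?_⟩
  change ((E + latticeRect a b).card : ℤ) = _
  obtain rfl | hr_pos := r.eq_zero_or_pos
  · -- The `0 × (q + 1)` rectangle is empty and would not grow, so we use the `h × q` one twice.
    have hE' : E = latticeRect h q ∪ latticeRect h q := by
      rw [hE, Nat.cast_zero, latticeRect_zero_left, Finset.empty_union, Finset.union_self]
    rw [ceil_natCast_div_of_dvd (Nat.dvd_of_mod_eq_zero hr.symm), ← hq, ← hcard, hE']
    exact card_latticeRect_union_latticeRect_add_latticeRect (by lia) le_rfl (by lia) le_rfl ha hb
  · have hdvd : ¬ h ∣ A := by rw [Nat.dvd_iff_mod_eq_zero]; lia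
    rw [ceil_natCast_div_of_not_dvd h1 hdvd, ← hq, ← hcard, hE]
    exact card_latticeRect_union_latticeRect_add_latticeRect (by lia) (by lia) (by lia) (by lia)
      ha hb
end
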